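/- Let C be a salient closed convex cone in a finite-dimensional real normed vector space V and let α be a continuous antinorm associated with C. Then α^∨(p) > 0 for every p in the relative interior ri(C^∨) of the negative dual cone. -/

import Mathlib

open Set

variable {V : Type*} [NormedAddCommGroup V] [NormedSpace ℝ V]

/-- `C` is a closed convex cone (containing the origin). -/
def IsClosedConvexCone (C : Set V) : Prop :=
  (0 : V) ∈ C ∧ IsClosed C ∧ Convex ℝ C ∧ ∀ c : ℝ, 0 < c → ∀ x ∈ C, c • x ∈ C

/-- A cone is salient if it contains no nonzero linear subspace,
equivalently it contains no pair `x, -x` with `x ≠ 0`. -/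
def IsSalientCone (C : Set V) : Prop := ∀ x ∈ C, x ≠ 0 → -x ∉ C

/-- The relative boundary of a set: the set minus its relative (intrinsic) interior. -/
def relBoundary (C : Set V) : Set V := C \ intrinsicInterior ℝ C

/-- `a` is an antinorm associated with the cone `C` : it takes values in `ℝ ∪ {-∞}`,
is positive on the relative interior of `C`, vanishes on the relative boundary of `C`,
is `-∞` off `C`, is positively homogeneous and superadditive (concave). -/
def IsAntinorm (C : Set V) (a : V → EReal) : Prop :=
  (∀ v, a v ≠ ⊤) ∧
  (∀ v ∈ intrinsicInterior ℝ C, 0 < a v) ∧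
  (∀ v ∈ relBoundary C, a v = 0) ∧
  (∀ v, v ∉ C → a v = ⊥) ∧
  (∀ c : ℝ, 0 < c → ∀ v, a (c • v) = (c : EReal) * a v) ∧
  (∀ v w, a v + a w ≤ a (v + w))

/-- The negative dual cone `C^∨ = {p : ⟨p,u⟩ ≤ 0 ∀ u ∈ C}`. -/
def negDual (C : Set V) : Set (V →L[ℝ] ℝ) := {p | ∀ u ∈ C, p u ≤ 0}

/-- The antisphere of radius `r`. -/
def antisphere (a : V → EReal) (r : ℝ) : Set V := {v | a v = (r : EReal)}

/-- The dual function `α^∨(p) = -sup_{v ∈ S₁} ⟨p, v⟩`. -/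
noncomputable def dualFn (a : V → EReal) (p : V →L[ℝ] ℝ) : EReal :=
  - sSup ((fun v => ((p v : ℝ) : EReal)) '' antisphere a 1)

/-- `p^∨_r` : the set of maximizers of `v ↦ ⟨p, v⟩` over the antisphere `S_r`. -/
def maxSet (a : V → EReal) (p : V →L[ℝ] ℝ) (r : ℝ) : Set V :=
  {v ∈ antisphere a r | ∀ w ∈ antisphere a r, p w ≤ p v}

/-- `p^∨ = ⋃_{r ≥ 0} p^∨_r`. -/
def pDual (a : V → EReal) (p : V →L[ℝ] ℝ) : Set V := ⋃ r ∈ Ici (0 : ℝ), maxSet a p r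

/-!
The antinorm `α` is concave and bounded above near `0`: if `u` is a relative interior point of `C`
and `λ = α u`, then `u - λ v ∈ C` for small `v ∈ C`, and superadditivity gives `λ α v ≤ α u = λ`.
Separating a point above `0` from the hypograph of `α`, a convex cone, yields a continuous linear
`ℓ` with `α ≤ ℓ`; in particular `-ℓ ∈ C^∨`. A relative interior point `p` of `C^∨` can be moved
slightly away from `-ℓ` inside `C^∨`, so `p + t (p + ℓ) ≤ 0` on `C` for some `t > 0`. On `S₁`,
where `ℓ ≥ 1`, this reads `p ≤ -t / (1 + t)`, so `α^∨ p ≥ t / (1 + t)`.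
-/

open Filter Topology

theorem mem_nhdsWithin_affineSpan_of_mem_intrinsicInterior {𝕜 W P : Type*} [Ring 𝕜]
    [AddCommGroup W] [Module 𝕜 W] [TopologicalSpace P] [AddTorsor W P] {s : Set P} {x : P}
    (hx : x ∈ intrinsicInterior 𝕜 s) : s ∈ 𝓝[affineSpan 𝕜 s] x := by
  obtain ⟨y, hy, rfl⟩ := mem_intrinsicInterior.1 hx
  exact preimage_coe_mem_nhds_subtype.1 (mem_interior_iff_mem_nhds.1 hy)

theorem exists_pos_lineMap_neg_mem_of_mem_intrinsicInterior {E : Type*} [AddCommGroup E]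
    [Module ℝ E] [TopologicalSpace E] [IsTopologicalAddGroup E] [ContinuousSMul ℝ E]
    {s : Set E} {x y : E} (hx : x ∈ intrinsicInterior ℝ s) (hy : y ∈ s) :
    ∃ t : ℝ, 0 < t ∧ AffineMap.lineMap x y (-t) ∈ s := by
  have hline : Tendsto (fun t : ℝ => AffineMap.lineMap x y (-t)) (𝓝 0)
      (𝓝[affineSpan ℝ s] x) := by
    refine tendsto_nhdsWithin_iff.2 ⟨?_, Eventually.of_forall fun t =>
      AffineMap.lineMap_mem _ (subset_affineSpan ℝ s (intrinsicInterior_subset hx))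
        (subset_affineSpan ℝ s hy)⟩
    have hcont : Continuous fun t : ℝ => AffineMap.lineMap x y (-t) :=
      AffineMap.lineMap_continuous.comp continuous_neg
    simpa using hcont.tendsto 0
  have hmem := hline.eventually (mem_nhdsWithin_affineSpan_of_mem_intrinsicInterior hx)
  obtain ⟨t, htmem, ht⟩ :=
    ((hmem.filter_mono nhdsWithin_le_nhds).and (self_mem_nhdsWithin (s := Ioi (0 : ℝ)))).exists
  exact ⟨t, ht, htmem⟩

section Superlinear

variable {E : Type*} [AddCommGroup E] [Module ℝ E]

/-- The hypograph of a positively homogeneous superadditive function, as a convex cone; only its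
points at finite height are recorded. -/
def hypographCone (f : E → EReal) (hsmul : ∀ c : ℝ, 0 < c → ∀ v, f (c • v) = c * f v)
    (hadd : ∀ v w, f v + f w ≤ f (v + w)) : ConvexCone ℝ (E × ℝ) where
  carrier := {x | (x.2 : EReal) ≤ f x.1}
  smul_mem' c hc x hx := by
    have hmul : (c : EReal) * x.2 ≤ c * f x.1 :=
      mul_le_mul_of_nonneg_left hx (EReal.coe_nonneg.2 hc.le)
    simpa [hsmul c hc] using hmul
  add_mem' x hx y hy := by
    simpa using (add_le_add hx hy).trans (hadd x.1 y.1)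

variable [TopologicalSpace E]

theorem exists_nonneg_on_convexCone_of_notMem_closure [IsTopologicalAddGroup E]
    [ContinuousSMul ℝ E] [LocallyConvexSpace ℝ E] {K : ConvexCone ℝ E} {x : E}
    (hK : (K : Set E).Nonempty) (hx : x ∉ closure (K : Set E)) :
    ∃ g : StrongDual ℝ E, (∀ y ∈ K, 0 ≤ g y) ∧ g x < 0 := by
  obtain ⟨P, hP⟩ : ∃ P : ProperCone ℝ E, (P : ConvexCone ℝ E) = K.closure :=
    CanLift.prf K.closure ⟨hK.closure, isClosed_closure⟩
  have hPK : (P : Set E) = closure K := congrArg SetLike.coe hP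
  obtain ⟨g, hg, hgx⟩ := P.hyperplane_separation_point (hPK ▸ hx : x ∉ (P : Set E))
  exact ⟨g, fun y hy => hg y (hPK.ge (subset_closure hy)), hgx⟩

theorem notMem_closure_hypographCone {f : E → EReal}
    {hsmul : ∀ c : ℝ, 0 < c → ∀ v, f (c • v) = c * f v}
    {hadd : ∀ v w, f v + f w ≤ f (v + w)} {v : E} {M t : ℝ}
    (hM : ∀ᶠ w in 𝓝 v, f w ≤ M) (ht : M < t) :
    (v, t) ∉ closure (hypographCone f hsmul hadd : Set (E × ℝ)) := by
  rw [mem_closure_iff_frequently, not_frequently, nhds_prod_eq]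
  filter_upwards [hM.prod_mk (lt_mem_nhds ht)] with x ⟨hfx, hMx⟩ hx
  exact (hx.trans hfx).not_gt (EReal.coe_lt_coe_iff.2 hMx)

theorem exists_strongDual_ge_of_superlinear [IsTopologicalAddGroup E] [ContinuousSMul ℝ E]
    [LocallyConvexSpace ℝ E] {f : E → EReal}
    (hsmul : ∀ c : ℝ, 0 < c → ∀ v, f (c • v) = c * f v)
    (hadd : ∀ v w, f v + f w ≤ f (v + w)) {M : ℝ} (hM : ∀ᶠ v in 𝓝 0, f v ≤ M) :
    ∃ l : StrongDual ℝ E, ∀ v, f v ≤ l v := by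
  rcases (hypographCone f hsmul hadd : Set (E × ℝ)).eq_empty_or_nonempty with hempty | hne
  · exact ⟨0, fun v => EReal.ge_of_forall_gt_iff_ge.1 fun t ht =>
      (eq_empty_iff_forall_notMem.1 hempty (v, t) ht.le).elim⟩
  obtain ⟨g, hg, hg0⟩ := exists_nonneg_on_convexCone_of_notMem_closure hne
    (notMem_closure_hypographCone hM ((le_abs_self M).trans_lt (lt_add_one _)))
  have hg_apply (v : E) (t : ℝ) : g (v, t) = g (v, 0) + t * g (0, 1) := by
    rw [← smul_eq_mul, ← map_smul, ← map_add]
    simp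
  have hvert : g (0, 1) < 0 := by
    rw [hg_apply, Prod.mk_zero_zero, map_zero, zero_add] at hg0
    exact (pos_iff_neg_of_mul_neg hg0).1 (by positivity)
  refine ⟨(-g (0, 1))⁻¹ • g.comp (.inl ℝ E ℝ), fun v => EReal.ge_of_forall_gt_iff_ge.1
    fun t ht => EReal.coe_le_coe_iff.2 ?_⟩
  have hgv : 0 ≤ g (v, 0) + t * g (0, 1) := hg_apply v t ▸ hg (v, t) ht.le
  simp only [smul_apply, ContinuousLinearMap.comp_apply, ContinuousLinearMap.inl_apply,
    smul_eq_mul]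
  rw [le_inv_mul_iff₀ (neg_pos.2 hvert)]
  linarith

end Superlinear

namespace IsAntinorm

variable {C : Set V} {a : V → EReal} {u v w : V}

theorem nonneg_iff_mem (ha : IsAntinorm C a) : 0 ≤ a v ↔ v ∈ C := by
  obtain ⟨-, hpos, hzero, hbot, -, -⟩ := ha
  refine ⟨fun h => of_not_not fun hv => ?_, fun hv => ?_⟩
  · simp [hbot v hv] at h
  · by_cases hvi : v ∈ intrinsicInterior ℝ C
    exacts [(hpos v hvi).le, (hzero v ⟨hv, hvi⟩).ge]

theorem nonpos_of_notMem_intrinsicInterior (ha : IsAntinorm C a)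
    (hv : v ∉ intrinsicInterior ℝ C) : a v ≤ 0 := by
  obtain ⟨-, -, hzero, hbot, -, -⟩ := ha
  by_cases hvC : v ∈ C
  · exact (hzero v ⟨hvC, hv⟩).le
  · exact (hbot v hvC).trans_le bot_le

theorem coe_toReal_of_mem (ha : IsAntinorm C a) (hv : v ∈ C) : ((a v).toReal : EReal) = a v :=
  EReal.coe_toReal (ha.1 v) (ne_bot_of_le_ne_bot EReal.zero_ne_bot (ha.nonneg_iff_mem.2 hv))

theorem add_mem (ha : IsAntinorm C a) (hv : v ∈ C) (hw : w ∈ C) : v + w ∈ C := by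
  have hsuper := ha.2.2.2.2.2
  rw [← ha.nonneg_iff_mem] at hv hw ⊢
  exact (add_nonneg hv hw).trans (hsuper v w)

theorem eventually_sub_smul_mem (ha : IsAntinorm C a) (hu : u ∈ intrinsicInterior ℝ C) (r : ℝ) :
    ∀ᶠ v in 𝓝 0, v ∈ C → u - r • v ∈ C := by
  have hmem := eventually_nhdsWithin_iff.1
    (mem_nhdsWithin_affineSpan_of_mem_intrinsicInterior hu)
  have htendsto : Tendsto (fun v : V => u - r • v) (𝓝 0) (𝓝 u) := by
    have hcont : Continuous fun v : V => u - r • v := by fun_prop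
    simpa using hcont.tendsto 0
  filter_upwards [htendsto.eventually hmem] with v hv hvC
  have huC := intrinsicInterior_subset hu
  have hline : u - r • v = AffineMap.lineMap u (u + v) (-r) := by
    simp [AffineMap.lineMap_apply_module', sub_eq_neg_add]
  exact hv (hline ▸ AffineMap.lineMap_mem _ (subset_affineSpan ℝ C huC)
    (subset_affineSpan ℝ C (ha.add_mem huC hvC)))

theorem le_one_of_sub_smul_mem (ha : IsAntinorm C a) (hu : u ∈ intrinsicInterior ℝ C)
    (hv : v ∈ C) (huv : u - (a u).toReal • v ∈ C) : a v ≤ 1 := by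
  have ⟨_, hpos, _, _, hsmul, hsuper⟩ := ha
  have hau := ha.coe_toReal_of_mem (intrinsicInterior_subset hu)
  have hr : 0 < (a u).toReal := EReal.coe_pos.1 (hau ▸ hpos u hu)
  have hmul : ((a u).toReal : EReal) * a v ≤ (a u).toReal := calc
    ((a u).toReal : EReal) * a v
      ≤ a (u - (a u).toReal • v) + (a u).toReal * a v :=
        le_add_of_nonneg_left (ha.nonneg_iff_mem.2 huv)
    _ = a (u - (a u).toReal • v) + a ((a u).toReal • v) := by rw [hsmul _ hr]
    _ ≤ a u := by simpa using hsuper (u - (a u).toReal • v) ((a u).toReal • v)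
    _ = (a u).toReal := hau.symm
  rw [← ha.coe_toReal_of_mem hv] at hmul ⊢
  norm_cast at hmul ⊢
  exact le_of_mul_le_mul_left (by rwa [mul_one]) hr

theorem eventually_le_one (ha : IsAntinorm C a) : ∀ᶠ v in 𝓝 0, a v ≤ 1 := by
  rcases (intrinsicInterior ℝ C).eq_empty_or_nonempty with hempty | ⟨u, hu⟩
  · exact Eventually.of_forall fun v =>
      (ha.nonpos_of_notMem_intrinsicInterior (hempty ▸ notMem_empty v)).trans zero_le_one
  filter_upwards [ha.eventually_sub_smul_mem hu (a u).toReal] with v hv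
  by_cases hvC : v ∈ C
  · exact ha.le_one_of_sub_smul_mem hu hvC (hv hvC)
  · exact (not_le.1 (mt ha.nonneg_iff_mem.1 hvC)).le.trans zero_le_one

theorem exists_strongDual_ge (ha : IsAntinorm C a) : ∃ l : StrongDual ℝ V, ∀ v, a v ≤ l v :=
  have ⟨_, _, _, _, hsmul, hsuper⟩ := ha
  exists_strongDual_ge_of_superlinear hsmul hsuper ha.eventually_le_one

theorem neg_mem_negDual (ha : IsAntinorm C a) {l : StrongDual ℝ V} (hl : ∀ v, a v ≤ l v) :
    -l ∈ negDual C := fun v hv => by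
  have hlv : 0 ≤ l v := EReal.coe_nonneg.1 ((ha.nonneg_iff_mem.2 hv).trans (hl v))
  simpa using hlv

end IsAntinorm

theorem coe_le_dualFn_iff {a : V → EReal} {p : V →L[ℝ] ℝ} {d : ℝ} :
    (d : EReal) ≤ dualFn a p ↔ ∀ v ∈ antisphere a 1, p v ≤ -d := by
  rw [dualFn, EReal.le_neg, sSup_le_iff, forall_mem_image]
  norm_cast

theorem statement2_general {C : Set V} {a : V → EReal} (ha : IsAntinorm C a) {p : V →L[ℝ] ℝ}
    (hp : p ∈ intrinsicInterior ℝ (negDual C)) : 0 < dualFn a p := by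
  obtain ⟨l, hl⟩ := ha.exists_strongDual_ge
  obtain ⟨t, ht, hmem⟩ :=
    exists_pos_lineMap_neg_mem_of_mem_intrinsicInterior hp (ha.neg_mem_negDual hl)
  have hbound : ∀ v ∈ antisphere a 1, p v ≤ -(t / (1 + t)) := fun v (hv : a v = (1 : ℝ)) => by
    have hvC : v ∈ C := ha.nonneg_iff_mem.1 (by simp [hv])
    have hlv : 1 ≤ l v := EReal.coe_le_coe_iff.1 (hv ▸ hl v)
    have hpv : (1 + t) * p v + t * l v ≤ 0 := by
      simpa [AffineMap.lineMap_apply_module] using hmem v hvC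
    rw [← neg_div, le_div_iff₀ (by positivity)]
    linarith [le_mul_of_one_le_right ht.le hlv]
  exact (EReal.coe_pos.2 (by positivity)).trans_le (coe_le_dualFn_iff.2 hbound)

/-- For a salient closed convex cone `C` and a continuous antinorm `a`
associated with `C`, the dual function is positive on the relative interior of the
negative dual cone. -/
theorem statement2 {V : Type*} [NormedAddCommGroup V] [NormedSpace ℝ V] [FiniteDimensional ℝ V]
    (C : Set V) (hC : IsClosedConvexCone C) (hsal : IsSalientCone C)
    (a : V → EReal) (ha : IsAntinorm C a) (hcont : ContinuousOn a C) :
    ∀ p ∈ intrinsicInterior ℝ (negDual C), 0 < dualFn a p :=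
  fun _ hp => statement2_general ha hp
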